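/- Let t ≥ 2, let p be the characteristic of F_q, and write n = p^s·u with gcd(u, p) = 1 and s ≥ 1. Let r(x) ∈ F_q[x] be any nonzero polynomial of degree at most v = n − 1 − u·⌈p^s/t⌉, and set l(x) = r(x)·(x^u − 1)^{⌈p^s/t⌉}. Then the linearized q-associate L of l is a t-NLP over F_{q^n}: the map induced by L on F_{q^n} is not identically zero, but its t-fold composition is identically zero. -/

import Mathlib

/-!
The map `L` is `l` evaluated at the `q`-Frobenius of `F_{q^n}`, viewed as an `F_q`-linear
endomorphism. The minimal polynomial of the Frobenius is `X ^ n - 1` (Dedekind's independence of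
`id, φ, …, φ ^ (n - 1)`), so `L` vanishes iff `X ^ n - 1 ∣ l`, and its `t`-fold composition vanishes
iff `X ^ n - 1 ∣ l ^ t`. In characteristic `p` we have `X ^ n - 1 = (X ^ u - 1) ^ p ^ s`, which
divides `l ^ t` because `t * ⌈p ^ s / t⌉ ≥ p ^ s`, while `l` itself is nonzero of degree `< n`.
-/

open Polynomial

section LinearizedAssociate

variable (F K : Type*) [Field F] [Fintype F]

/-- The linearized `q`-associate, `q = #F`, of a polynomial over `F`, as an endomorphism of an
`F`-algebra. It is encoded as evaluation at the Frobenius `z ↦ z ^ q`, so that multiplication of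
polynomials corresponds to composition of maps. -/
noncomputable def linearizedAssociate [CommRing K] [Algebra F K] : F[X] →ₐ[F] Module.End F K :=
  aeval (FiniteField.frobeniusAlgHom F K).toLinearMap

variable {F K}

theorem linearizedAssociate_apply [CommRing K] [Algebra F K] (l : F[X]) (z : K) :
    linearizedAssociate F K l z =
      ∑ i ∈ Finset.range (l.natDegree + 1),
        algebraMap F K (l.coeff i) * z ^ Fintype.card F ^ i := by
  rw [linearizedAssociate, aeval_eq_sum_range, LinearMap.sum_apply]
  refine Finset.sum_congr rfl fun i _ ↦ ?_
  rw [LinearMap.smul_apply, Algebra.smul_def, Module.End.coe_pow, AlgHom.coe_toLinearMap,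
    FiniteField.coe_frobeniusAlgHom, pow_iterate]

variable [Field K] [Algebra F K] [Finite K]

theorem linearizedAssociate_eq_zero_iff {l : F[X]} :
    linearizedAssociate F K l = 0 ↔ X ^ Module.finrank F K - 1 ∣ l := by
  rw [← FiniteField.minpoly_frobeniusAlgHom, minpoly.dvd_iff, linearizedAssociate]

theorem linearizedAssociate_ne_zero {l : F[X]} (hl : l ≠ 0)
    (hdeg : l.natDegree < Module.finrank F K) : linearizedAssociate F K l ≠ 0 := by
  intro h
  have hle := natDegree_le_of_dvd (linearizedAssociate_eq_zero_iff.mp h) hl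
  rw [← C_1, natDegree_X_pow_sub_C] at hle
  exact hdeg.not_ge hle

theorem linearizedAssociate_pow_eq_zero_iff {l : F[X]} {t : ℕ} :
    linearizedAssociate F K l ^ t = 0 ↔ X ^ Module.finrank F K - 1 ∣ l ^ t := by
  rw [← map_pow, linearizedAssociate_eq_zero_iff]

end LinearizedAssociate

theorem finrank_eq_of_card_eq_pow {F V : Type*} [DivisionRing F] [AddCommGroup V] [Module F V]
    [Fintype F] [Fintype V] {n : ℕ} (h : Fintype.card V = Fintype.card F ^ n) :
    Module.finrank F V = n :=
  Nat.pow_right_injective Fintype.one_lt_card (Module.card_eq_pow_finrank.symm.trans h)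

theorem ceilDiv_lt_self {m t : ℕ} (hm : 1 < m) (ht : 1 < t) : m ⌈/⌉ t < m := by
  have h : m ⌈/⌉ t ≤ m - 1 := by
    rw [ceilDiv_le_iff_le_mul (by omega)]
    calc m ≤ 2 * (m - 1) := by omega
      _ ≤ t * (m - 1) := Nat.mul_le_mul_right _ ht
  omega

section XPowSubOne

variable {R : Type*} [CommRing R]

theorem X_pow_sub_one_pow_expChar_pow (p : ℕ) [ExpChar R p] (s u : ℕ) :
    (X ^ u - 1 : R[X]) ^ p ^ s = X ^ (p ^ s * u) - 1 := by
  rw [sub_pow_expChar_pow, one_pow, ← pow_mul, mul_comm]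

theorem X_pow_sub_one_dvd_mul_pow (p : ℕ) [ExpChar R p] {s e t : ℕ} (he : p ^ s ≤ t * e)
    (u : ℕ) (r : R[X]) : X ^ (p ^ s * u) - 1 ∣ (r * (X ^ u - 1) ^ e) ^ t := by
  rw [← X_pow_sub_one_pow_expChar_pow, mul_pow, ← pow_mul, mul_comm e]
  exact (pow_dvd_pow _ he).mul_left _

theorem mul_X_pow_sub_one_pow_ne_zero {r : R[X]} (hr : r ≠ 0) {u : ℕ} (hu : u ≠ 0) (e : ℕ) :
    r * (X ^ u - 1) ^ e ≠ 0 :=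
  ((monic_X_pow_sub_C 1 hu).pow e).mul_left_ne_zero hr

theorem natDegree_mul_X_pow_sub_one_pow_le (r : R[X]) (u e : ℕ) :
    (r * (X ^ u - 1) ^ e).natDegree ≤ r.natDegree + u * e := by
  have hu : (X ^ u - 1 : R[X]).natDegree ≤ u := by compute_degree
  calc (r * (X ^ u - 1) ^ e).natDegree ≤ r.natDegree + ((X ^ u - 1 : R[X]) ^ e).natDegree :=
        natDegree_mul_le
    _ ≤ r.natDegree + u * e := by
        rw [mul_comm u]
        gcongr
        exact natDegree_pow_le_of_le e hu

theorem natDegree_mul_X_pow_sub_one_pow_ceilDiv_lt {m t u : ℕ} (hm : 1 < m) (ht : 1 < t)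
    (hu : 0 < u) {r : R[X]}
    (hdeg : r.natDegree ≤ m * u - 1 - u * (m ⌈/⌉ t)) :
    (r * (X ^ u - 1) ^ (m ⌈/⌉ t)).natDegree < m * u := by
  have hlt : u * (m ⌈/⌉ t) < m * u := by
    rw [mul_comm m]
    exact Nat.mul_lt_mul_of_pos_left (ceilDiv_lt_self hm ht) hu
  have hle := natDegree_mul_X_pow_sub_one_pow_le r u (m ⌈/⌉ t)
  omega

end XPowSubOne

theorem stmt_7_general {Fq K : Type*} [Field Fq] [Field K] [Algebra Fq K]
    [Fintype Fq] [Fintype K] (q n : ℕ)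
    (hq : Fintype.card Fq = q) (hcard : Fintype.card K = q ^ n)
    (t p s u : ℕ) (ht : 2 ≤ t) (hp : CharP Fq p) (hs : 1 ≤ s) (hnsu : n = p ^ s * u)
    (r : Polynomial Fq) (hr : r ≠ 0)
    (hdeg : r.natDegree ≤ n - 1 - u * ((p ^ s + t - 1) / t))
    (l : Polynomial Fq)
    (hl : l = r * (Polynomial.X ^ u - 1) ^ ((p ^ s + t - 1) / t))
    (M : K → K)
    (hM : ∀ z, M z = ∑ i ∈ Finset.range (l.natDegree + 1),
        algebraMap Fq K (l.coeff i) * z ^ q ^ i) :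
    (∃ z, M z ≠ 0) ∧ ∀ z, M^[t] z = 0 := by
  subst hq hnsu
  rw [← Nat.ceilDiv_eq_add_pred_div] at hl hdeg
  have hprime : Fact p.Prime := ⟨CharP.char_is_prime Fq p⟩
  have hfinrank : Module.finrank Fq K = p ^ s * u := finrank_eq_of_card_eq_pow hcard
  have hu : 0 < u := Nat.pos_of_mul_pos_left (hfinrank ▸ Module.finrank_pos)
  have hps : 1 < p ^ s := Nat.one_lt_pow (by omega) hprime.out.one_lt
  have hML : M = linearizedAssociate Fq K l :=
    funext fun z ↦ (hM z).trans (linearizedAssociate_apply l z).symm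
  have hne : linearizedAssociate Fq K l ≠ 0 := by
    refine linearizedAssociate_ne_zero (hl ▸ mul_X_pow_sub_one_pow_ne_zero hr hu.ne' _) ?_
    rw [hfinrank, hl]
    exact natDegree_mul_X_pow_sub_one_pow_ceilDiv_lt hps ht hu hdeg
  have hpow : linearizedAssociate Fq K l ^ t = 0 := by
    rw [linearizedAssociate_pow_eq_zero_iff, hfinrank, hl]
    exact X_pow_sub_one_dvd_mul_pow p (le_smul_ceilDiv (zero_lt_two.trans_le ht)) u r
  rw [hML]
  exact ⟨DFunLike.ne_iff.mp hne, fun z ↦ by rw [← Module.End.pow_apply, hpow, LinearMap.zero_apply]⟩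

/-- Let `t ≥ 2`, `p = char F_q`, `n = p^s u` with `gcd(u, p) = 1` and
`s ≥ 1`.  Let `r ∈ F_q[x]` be nonzero of degree at most `v = n - 1 - u⌈p^s/t⌉`, and set
`l = r (x^u - 1)^{⌈p^s/t⌉}`.  Then the linearized `q`-associate `L` of `l` is a `t`-NLP over
`F_{q^n}`: the induced map is not identically zero, but its `t`-fold composition is. -/
theorem stmt_7 {Fq K : Type*} [Field Fq] [Field K] [Algebra Fq K]
    [Fintype Fq] [Fintype K] (q n : ℕ)
    (hq : Fintype.card Fq = q) (hcard : Fintype.card K = q ^ n) (hn : 1 < n)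
    (t p s u : ℕ) (ht : 2 ≤ t) (hp : CharP Fq p) (hs : 1 ≤ s)
    (hu : Nat.Coprime u p) (hnsu : n = p ^ s * u)
    (r : Polynomial Fq) (hr : r ≠ 0)
    (hdeg : r.natDegree ≤ n - 1 - u * ((p ^ s + t - 1) / t))
    (l : Polynomial Fq)
    (hl : l = r * (Polynomial.X ^ u - 1) ^ ((p ^ s + t - 1) / t))
    (M : K → K)
    (hM : ∀ z, M z = ∑ i ∈ Finset.range (l.natDegree + 1),
        algebraMap Fq K (l.coeff i) * z ^ q ^ i) :
    (∃ z, M z ≠ 0) ∧ ∀ z, M^[t] z = 0 :=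
  stmt_7_general q n hq hcard t p s u ht hp hs hnsu r hr hdeg l hl M hM
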